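/- Let α ∈ (0,1], d > 0, c ∈ ℝ and T₀ > 0. There exists a constant C ≥ 1, depending only on α, d, c and T₀, such that for every v₀ ∈ W^{1,1}_{1+α}(ℝ,ℂ), all 0 ≤ s ≤ t ≤ T₀ and j ∈ {0,1}: ∫_ℝ ∫_s^t (1+|k|) | ∂_k^j ( (−k² d + i c k) e^{(−k² d + i c k) r} v₀(k) ) | dr dk ≤ C ‖v₀‖_{W^{1,1}_{1+α}} ( t^{α/2} − s^{α/2} ), where for j = 1 the derivative is taken in the weak sense. -/

import Mathlib

open MeasureTheory Real

noncomputable section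

/-- `v'` is the weak derivative of `v : ℝ → ℂ`. -/
def HasWeakDeriv (v v' : ℝ → ℂ) : Prop :=
  LocallyIntegrable v volume ∧ LocallyIntegrable v' volume ∧
    ∀ φ : ℝ → ℝ, ContDiff ℝ (⊤ : ℕ∞) φ → HasCompactSupport φ →
      ∫ k, Complex.ofReal (deriv φ k) * v k = -∫ k, Complex.ofReal (φ k) * v' k

/-- `e^{x + iy}` for real `x, y`. -/
def expc (x y : ℝ) : ℂ := Complex.exp (Complex.ofReal x + Complex.ofReal y * Complex.I)

/-- the symbol `-k²d + ick`. -/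
def symb (d c k : ℝ) : ℂ := Complex.ofReal (-(k ^ 2 * d)) + Complex.ofReal (c * k) * Complex.I

/-- The symbol is bounded by a multiple of `1 + k²`. -/
lemma norm_symb_le {d : ℝ} (hd : 0 < d) (c k : ℝ) :
    ‖symb d c k‖ ≤ (d + |c|) * (1 + k ^ 2) := by
  have hk : |k| ≤ 1 + k ^ 2 := by nlinarith [sq_abs k, sq_nonneg (|k| - 1)]
  refine (norm_add_le _ _).trans ?_
  rw [norm_mul, Complex.norm_I, Complex.norm_real, Complex.norm_real, norm_neg, Real.norm_eq_abs,
    Real.norm_eq_abs, abs_mul c k, abs_of_nonneg (by positivity : 0 ≤ k ^ 2 * d)]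
  nlinarith [mul_le_mul_of_nonneg_left hk (abs_nonneg c)]

/-- The derivative of the symbol is bounded by a multiple of `1 + k²`. -/
lemma norm_deriv_symb_le {d : ℝ} (hd : 0 < d) (c k : ℝ) :
    ‖Complex.ofReal (-(2 * k * d)) + Complex.ofReal c * Complex.I‖ ≤ (d + |c|) * (1 + k ^ 2) := by
  have hk : 2 * |k| ≤ 1 + k ^ 2 := by nlinarith [sq_abs k, sq_nonneg (|k| - 1)]
  refine (norm_add_le _ _).trans ?_
  rw [norm_mul, Complex.norm_I, Complex.norm_real, Complex.norm_real, norm_neg, Real.norm_eq_abs,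
    Real.norm_eq_abs, abs_mul, abs_mul, abs_two, abs_of_pos hd]
  nlinarith [mul_le_mul_of_nonneg_left hk hd.le, mul_nonneg (abs_nonneg c) (sq_nonneg k)]

lemma norm_expc (x y : ℝ) : ‖expc x y‖ = Real.exp x := by
  simp [expc, Complex.norm_exp]

/-- Half of the Gaussian decay absorbs the factor `(1 + k²) r`. -/
lemma one_add_sq_mul_exp_le {d T r : ℝ} (hd : 0 < d) (hr : 0 ≤ r) (hrT : r ≤ T) (k : ℝ) :
    (1 + k ^ 2) * r * Real.exp (-(k ^ 2 * d * r / 2)) ≤ T + 2 / d := by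
  have hE1 : Real.exp (-(k ^ 2 * d * r / 2)) ≤ 1 :=
    Real.exp_le_one_iff.2 (neg_nonpos.2 (by positivity))
  have hE0 := Real.exp_pos (-(k ^ 2 * d * r / 2))
  have hy : (k ^ 2 * d * r / 2) * Real.exp (-(k ^ 2 * d * r / 2)) ≤ 1 := by
    rw [Real.exp_neg, ← div_eq_mul_inv, div_le_one (Real.exp_pos _)]
    linarith [Real.add_one_le_exp (k ^ 2 * d * r / 2)]
  have h1 : r * Real.exp (-(k ^ 2 * d * r / 2)) ≤ T := by nlinarith
  have h2 : k ^ 2 * r * Real.exp (-(k ^ 2 * d * r / 2)) ≤ 2 / d := by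
    rw [le_div_iff₀ hd]; linarith
  linarith

/-- Smoothing estimate for the Gaussian factor. -/
lemma one_add_sq_mul_exp_le_rpow {α d T r : ℝ} (hα : 0 < α) (hα1 : α ≤ 1) (hd : 0 < d)
    (hr : 0 < r) (hrT : r ≤ T) (k : ℝ) :
    (1 + k ^ 2) * Real.exp (-(k ^ 2 * d * r / 2)) ≤
      (1 + (T + 2 / d)) * (1 + |k|) ^ α * r ^ (α / 2 - 1) := by
  have hq : 0 < 1 + k ^ 2 := by positivity
  have hE1 : Real.exp (-(k ^ 2 * d * r / 2)) ≤ 1 :=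
    Real.exp_le_one_iff.2 (neg_nonpos.2 (by positivity))
  have hE0 := Real.exp_pos (-(k ^ 2 * d * r / 2))
  have hD := one_add_sq_mul_exp_le hd hr.le hrT k
  set E := Real.exp (-(k ^ 2 * d * r / 2))
  have hx : 0 < (1 + k ^ 2) * r := by positivity
  have hpow : ((1 + k ^ 2) * r) ^ (1 - α / 2) ≤ 1 + (1 + k ^ 2) * r := by
    rcases le_total ((1 + k ^ 2) * r) 1 with h | h
    · linarith [Real.rpow_le_one hx.le h (by linarith : 0 ≤ 1 - α / 2)]
    · have := Real.rpow_le_rpow_of_exponent_le h (by linarith : 1 - α / 2 ≤ 1)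
      rw [Real.rpow_one] at this
      linarith
  have hB : ((1 + k ^ 2) * r) ^ (1 - α / 2) * E ≤ 1 + (T + 2 / d) := by
    nlinarith [mul_le_mul_of_nonneg_right hpow hE0.le]
  have hk : (1 + k ^ 2) ^ (α / 2) ≤ (1 + |k|) ^ α := by
    have : (1 + |k|) ^ α = ((1 + |k|) ^ 2) ^ (α / 2) := by
      rw [← Real.rpow_natCast, ← Real.rpow_mul (by positivity)]
      congr 1
      push_cast
      ring
    rw [this]
    exact Real.rpow_le_rpow hq.le (by nlinarith [sq_abs k, abs_nonneg k]) (by positivity)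
  have hsplit : (1 + k ^ 2) * E =
      ((1 + k ^ 2) * r) ^ (1 - α / 2) * E * (1 + k ^ 2) ^ (α / 2) * r ^ (α / 2 - 1) := by
    have e1 : (1 + k ^ 2) ^ (1 - α / 2) * (1 + k ^ 2) ^ (α / 2) = 1 + k ^ 2 := by
      rw [← Real.rpow_add hq, sub_add_cancel, Real.rpow_one]
    have e2 : r ^ (1 - α / 2) * r ^ (α / 2 - 1) = 1 := by
      rw [← Real.rpow_add hr]
      simp
    rw [Real.mul_rpow hq.le hr.le]
    linear_combination (-E) * e1 -
      (1 + k ^ 2) ^ (1 - α / 2) * (1 + k ^ 2) ^ (α / 2) * E * e2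
  rw [hsplit]
  have hT : 0 ≤ 1 + (T + 2 / d) := by have := hr.trans_le hrT; positivity
  gcongr

/-- The bound for the generator applied to the semigroup (`j = 0`) and its derivative (`j = 1`)
by a Gaussian with half the decay rate. -/
lemma norm_deriv_generator_semigroup_le {d T r : ℝ} (hd : 0 < d) (hr : 0 ≤ r) (hrT : r ≤ T)
    (c k : ℝ) (v v' : ℂ) (j : ℕ) :
    ‖if j = 0 then symb d c k * expc (-(k ^ 2 * d * r)) (c * k * r) * v
      else (Complex.ofReal (-(2 * k * d)) + Complex.ofReal c * Complex.I) *
            expc (-(k ^ 2 * d * r)) (c * k * r) * v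
          + symb d c k *
              (Complex.ofReal (-(2 * k * d * r)) + Complex.ofReal (c * r) * Complex.I) *
              expc (-(k ^ 2 * d * r)) (c * k * r) * v
          + symb d c k * expc (-(k ^ 2 * d * r)) (c * k * r) * v'‖ ≤
      ((d + |c|) + (d + |c|) ^ 2 * (T + 2 / d)) *
        ((1 + k ^ 2) * Real.exp (-(k ^ 2 * d * r / 2))) * (‖v‖ + ‖v'‖) := by
  have hE1 : Real.exp (-(k ^ 2 * d * r / 2)) ≤ 1 :=
    Real.exp_le_one_iff.2 (neg_nonpos.2 (by positivity))
  have hE0 := Real.exp_pos (-(k ^ 2 * d * r / 2))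
  have hD := one_add_sq_mul_exp_le hd hr hrT k
  have hexp : ‖expc (-(k ^ 2 * d * r)) (c * k * r)‖ =
      Real.exp (-(k ^ 2 * d * r / 2)) * Real.exp (-(k ^ 2 * d * r / 2)) := by
    rw [norm_expc, ← Real.exp_add]
    ring_nf
  have hS := norm_symb_le hd c k
  have hS' := norm_deriv_symb_le hd c k
  have hfac : (Complex.ofReal (-(2 * k * d * r)) + Complex.ofReal (c * r) * Complex.I) =
      (Complex.ofReal (-(2 * k * d)) + Complex.ofReal c * Complex.I) * Complex.ofReal r := by
    push_cast
    ring
  rw [hfac]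
  generalize Complex.ofReal (-(2 * k * d)) + Complex.ofReal c * Complex.I = S' at *
  generalize expc (-(k ^ 2 * d * r)) (c * k * r) = e at *
  generalize symb d c k = S at *
  generalize Real.exp (-(k ^ 2 * d * r / 2)) = E at *
  have hA : 0 < d + |c| := by positivity
  generalize d + |c| = A at *
  have hT : 0 ≤ T + 2 / d := by have := hr.trans hrT; positivity
  generalize T + 2 / d = D at *
  have hq : 0 < 1 + k ^ 2 := by positivity
  generalize 1 + k ^ 2 = q at *
  have he : ‖e‖ ≤ E := by rw [hexp]; nlinarith
  have hSe : ∀ (Z w : ℂ), ‖Z‖ ≤ A * q → ‖Z * e * w‖ ≤ A * (q * E) * ‖w‖ := by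
    intro Z w hZ
    rw [norm_mul, norm_mul, ← mul_assoc A]
    gcongr
  have hmid : ‖S * (S' * Complex.ofReal r) * e * v‖ ≤ A ^ 2 * D * (q * E) * ‖v‖ := by
    rw [norm_mul, norm_mul, norm_mul, norm_mul, hexp, Complex.norm_real, Real.norm_eq_abs,
      abs_of_nonneg hr]
    refine mul_le_mul_of_nonneg_right ?_ (norm_nonneg v)
    calc ‖S‖ * (‖S'‖ * r) * (E * E) ≤ (A * q) * ((A * q) * r) * (E * E) := by gcongr
      _ = A ^ 2 * (q * r * E) * (q * E) := by ring
      _ ≤ A ^ 2 * D * (q * E) := by gcongr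
  have hn := norm_nonneg v
  have hn' := norm_nonneg v'
  have hM : 0 ≤ A ^ 2 * D * (q * E) := by positivity
  have hN : 0 ≤ A * (q * E) := by positivity
  split_ifs with hj
  · nlinarith [hSe S v hS, mul_nonneg hM hn, mul_nonneg hM hn', mul_nonneg hN hn']
  · refine norm_add₃_le.trans ?_
    nlinarith [mul_nonneg hM hn', hSe S' v hS', hSe S v' hS]

/-- Hölder-in-time estimate for the generator applied to the semigroup:
for `j ∈ {0,1}` and `0 ≤ s ≤ t ≤ T₀`,
`∫_ℝ ∫_s^t (1+|k|) |∂_k^j ((-k²d+ick) e^{(-k²d+ick)r} v₀(k))| dr dk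
  ≤ C ‖v₀‖_{W^{1,1}_{1+α}} (t^{α/2} - s^{α/2})`. -/
theorem semigroup_holder_estimate (α : ℝ) (hα : 0 < α) (hα1 : α ≤ 1)
    (d c : ℝ) (hd : 0 < d) (T₀ : ℝ) (hT₀ : 0 < T₀) :
    ∃ C : ℝ, 1 ≤ C ∧
      ∀ v₀ v₀' : ℝ → ℂ, HasWeakDeriv v₀ v₀' →
        Integrable (fun k => (1 + |k|) ^ (1 + α) * ‖v₀ k‖) →
        Integrable (fun k => (1 + |k|) ^ (1 + α) * ‖v₀' k‖) →
        ∀ s t : ℝ, 0 ≤ s → s ≤ t → t ≤ T₀ →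
          ∀ j : ℕ, j ≤ 1 →
            (∫ k : ℝ, ∫ r in s..t, (1 + |k|) *
                ‖if j = 0 then symb d c k * expc (-(k ^ 2 * d * r)) (c * k * r) * v₀ k
                  else (Complex.ofReal (-(2 * k * d)) + Complex.ofReal c * Complex.I) *
                        expc (-(k ^ 2 * d * r)) (c * k * r) * v₀ k
                      + symb d c k *
                          (Complex.ofReal (-(2 * k * d * r)) + Complex.ofReal (c * r) * Complex.I) *
                          expc (-(k ^ 2 * d * r)) (c * k * r) * v₀ k
                      + symb d c k * expc (-(k ^ 2 * d * r)) (c * k * r) * v₀' k‖) ≤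
              C * ((∫ k : ℝ, (1 + |k|) ^ (1 + α) * ‖v₀ k‖)
                    + ∫ k : ℝ, (1 + |k|) ^ (1 + α) * ‖v₀' k‖) *
                (t ^ (α / 2) - s ^ (α / 2)) := by
  have hA : 0 < d + |c| := by positivity
  set A := (d + |c|) + (d + |c|) ^ 2 * (T₀ + 2 / d) with hAdef
  have hA0 : 0 ≤ A := by positivity
  have hB0 : 0 ≤ 1 + (T₀ + 2 / d) := by positivity
  set B := 1 + (T₀ + 2 / d) with hBdef
  refine ⟨1 + A * B * (2 / α), by linarith [show 0 ≤ A * B * (2 / α) by positivity], ?_⟩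
  intro v₀ v₀' _ hv hv' s t hs hst ht j _
  have hts : 0 ≤ t ^ (α / 2) - s ^ (α / 2) :=
    sub_nonneg.2 (Real.rpow_le_rpow hs hst (by positivity))
  rw [← integral_add hv hv', mul_right_comm, ← integral_const_mul]
  refine integral_mono_of_nonneg (ae_of_all _ fun k => ?_) ((hv.add hv').const_mul _)
    (ae_of_all _ fun k => ?_)
  · exact intervalIntegral.integral_nonneg hst fun r _ => by positivity
  · have hk : 0 < 1 + |k| := by positivity
    have hrpow : ∫ r in s..t, r ^ (α / 2 - 1) = (t ^ (α / 2) - s ^ (α / 2)) * (2 / α) := by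
      rw [integral_rpow (Or.inl (by linarith)), sub_add_cancel]
      field_simp
    have hint : IntervalIntegrable (fun r : ℝ => r ^ (α / 2 - 1)) volume s t :=
      intervalIntegral.intervalIntegrable_rpow' (by linarith)
    refine (intervalIntegral.integral_mono_on_of_le_Ioo hst
      (g := fun r => A * B * (1 + |k|) ^ (1 + α) * (‖v₀ k‖ + ‖v₀' k‖) * r ^ (α / 2 - 1))
      ?_ (hint.const_mul _) ?_).trans ?_
    · apply Continuous.intervalIntegrable
      unfold expc
      split_ifs <;> fun_prop
    · intro r hr
      have hr0 : 0 < r := hs.trans_lt hr.1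
      have hrT : r ≤ T₀ := hr.2.le.trans ht
      have h1 := norm_deriv_generator_semigroup_le hd hr0.le hrT c k (v₀ k) (v₀' k) j
      have h2 := one_add_sq_mul_exp_le_rpow hα hα1 hd hr0 hrT k
      rw [← hAdef] at h1
      rw [← hBdef] at h2
      refine (mul_le_mul_of_nonneg_left h1 hk.le).trans ?_
      calc _ ≤ (1 + |k|) * (A * (B * (1 + |k|) ^ α * r ^ (α / 2 - 1)) * (‖v₀ k‖ + ‖v₀' k‖)) := by
            gcongr
        _ = _ := by
            rw [Real.rpow_add hk, Real.rpow_one]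
            ring
    · rw [intervalIntegral.integral_const_mul, hrpow]
      have hN : 0 ≤ (1 + |k|) ^ (1 + α) * (‖v₀ k‖ + ‖v₀' k‖) := by positivity
      nlinarith [mul_nonneg hN hts]
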